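/- Energy dissipation along the variational estimator (core of Theorem 1). Let D ∈ ℝ^{3×β} and p̄ ∈ ℝ³ be constant, W ∈ ℝ^{β×β} symmetric positive definite, κ > 0, 𝕁, 𝔻 ∈ ℝ^{6×6} symmetric positive definite, and Φ : [0,∞) → [0,∞) a C² function with Φ(0)=0 and Φ'(x) > 0. Let g(t) = [[R(t), b(t)],[0,1]] be a C¹ curve with ġ = g ξ(t)^∨, and suppose measurements are perfect: L(t) = R(t)ᵀ D, ā(t) = R(t)ᵀ(p̄ − b(t)), ξᵐ(t) = ξ(t). Let (ĝ(t), φ(t)), with ĝ(t) = [[R̂(t), b̂(t)],[0,1]], be a C¹ solution of the estimator equations 𝕁 φ̇ = (ad_φ)ᵀ 𝕁 φ − Z − 𝔻 φ, ξ̂ = ξ − Ad_{ĝ⁻¹} φ, ĝ̇ = ĝ ξ̂^∨, where y = p̄ − R̂ ā − b̂, S_Γ(R̂) = vex(D W Lᵀ R̂ᵀ − R̂ L W Dᵀ), U_r = ½⟨D − R̂L, (D − R̂L)W⟩, and Z = (Φ'(U_r) S_Γ(R̂) + κ p̄^× y, κ y) ∈ ℝ⁶. Then the total energy V(t) = ½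 φᵀ 𝕁 φ + Φ(U_r) + ½ κ ‖y‖² satisfies dV/dt = − φᵀ 𝔻 φ ≤ 0 for all t; i.e., the estimator dissipates the energy content of the estimation errors. -/

import Mathlib

open Matrix

noncomputable section

/-- The skew-symmetric matrix `x^×` with `x^× y = x × y`. -/
def skew (x : Fin 3 → ℝ) : Matrix (Fin 3) (Fin 3) ℝ :=
  !![0, -x 2, x 1; x 2, 0, -x 0; -x 1, x 0, 0]

/-- The inverse `vex` of the map `x ↦ x^×` on skew-symmetric matrices. -/
def vex (A : Matrix (Fin 3) (Fin 3) ℝ) : Fin 3 → ℝ :=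
  ![A 2 1, A 0 2, A 1 0]

/-- For `ξ = (Ω, ν) ∈ ℝ⁶`, the 4×4 matrix `ξ^∨ = [[Ω^×, ν],[0,0]]`. -/
def hat4 (Ω ν : Fin 3 → ℝ) : Matrix (Fin 3 ⊕ Fin 1) (Fin 3 ⊕ Fin 1) ℝ :=
  Matrix.fromBlocks (skew Ω) (Matrix.of fun i _ => ν i) 0 0

/-- The 4×4 pose matrix `[[R, b],[0,1]]`. -/
def pose (R : Matrix (Fin 3) (Fin 3) ℝ) (b : Fin 3 → ℝ) :
    Matrix (Fin 3 ⊕ Fin 1) (Fin 3 ⊕ Fin 1) ℝ :=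
  Matrix.fromBlocks R (Matrix.of fun i _ => b i) 0 1

/-- The adjoint matrix `Ad_g = [[R, 0],[b^× R, R]]` for `g = [[R,b],[0,1]]`. -/
def AdMat (R : Matrix (Fin 3) (Fin 3) ℝ) (b : Fin 3 → ℝ) :
    Matrix (Fin 3 ⊕ Fin 3) (Fin 3 ⊕ Fin 3) ℝ :=
  Matrix.fromBlocks R 0 (skew b * R) R

/-- The 6×6 matrix `ad_ζ = [[w^×, 0],[v^×, w^×]]` for `ζ = (w, v)`. -/
def adMat (w v : Fin 3 → ℝ) : Matrix (Fin 3 ⊕ Fin 3) (Fin 3 ⊕ Fin 3) ℝ :=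
  Matrix.fromBlocks (skew w) 0 (skew v) (skew w)

/-- The 3×6 matrix `G(a) = [a^× −I]`. -/
def Gmat (a : Fin 3 → ℝ) : Matrix (Fin 3) (Fin 3 ⊕ Fin 3) ℝ :=
  Matrix.of fun i => Sum.elim (fun j => skew a i j) (fun j => (-(1 : Matrix (Fin 3) (Fin 3) ℝ)) i j)

/-!
The estimator error evolves autonomously. The true angular velocity `Ω` and translational
velocity `ν` cancel, so the reconstructed directions `A = R̂ L` satisfy `Ȧ = -w^× A` and the
position residual satisfies `ẏ = w × (p̄ - y) + v`, where `φ = (w, v)`. Hence the two potential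
terms change at the rate `φ ⬝ Z`. In the kinetic term the gyroscopic force `ad*_φ 𝕁 φ` does no
work, because `ad_φ φ = 0`, so its rate is `-φ ⬝ Z - φ ⬝ 𝔻 φ`, and only the damping survives in
the sum.
-/

section MatrixCalculus

variable {𝕜 E 𝔸 l m n p : Type*} [NontriviallyNormedField 𝕜]
  [NormedAddCommGroup E] [NormedSpace 𝕜 E] [NormedRing 𝔸] [NormedAlgebra 𝕜 𝔸] {t : 𝕜}

theorem hasDerivAt_matrix {A : 𝕜 → Matrix l n E} {A' : Matrix l n E} :
    HasDerivAt A A' t ↔ ∀ i j, HasDerivAt (fun s => A s i j) (A' i j) t := by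
  simp only [HasDerivAt, HasDerivAtFilter, hasFDerivAtFilter_iff_isLittleOTVS]
  exact Asymptotics.isLittleOTVS_pi.trans (forall_congr' fun _ => Asymptotics.isLittleOTVS_pi)

theorem hasDerivAt_matrix_const (A : Matrix l n E) (t : 𝕜) : HasDerivAt (fun _ => A) 0 t :=
  hasDerivAt_matrix.2 fun i j => hasDerivAt_const t (A i j)

theorem hasDerivAt_matrix_transpose {A : 𝕜 → Matrix m n E} {A' : Matrix m n E}
    (hA : HasDerivAt A A' t) : HasDerivAt (fun s => (A s)ᵀ) A'ᵀ t :=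
  hasDerivAt_matrix.2 fun i j => hasDerivAt_matrix.1 hA j i

variable [Fintype m] [Fintype n]

theorem hasDerivAt_matrix_trace {A : 𝕜 → Matrix n n E} {A' : Matrix n n E}
    (hA : HasDerivAt A A' t) : HasDerivAt (fun s => (A s).trace) A'.trace t :=
  HasDerivAt.fun_sum fun i _ => hasDerivAt_matrix.1 hA i i

theorem hasDerivAt_dotProduct {x y : 𝕜 → n → 𝔸} {x' y' : n → 𝔸}
    (hx : HasDerivAt x x' t) (hy : HasDerivAt y y' t) :
    HasDerivAt (fun s => x s ⬝ᵥ y s) (x' ⬝ᵥ y t + x t ⬝ᵥ y') t := by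
  simp only [dotProduct, ← Finset.sum_add_distrib]
  exact HasDerivAt.fun_sum fun i _ => (hasDerivAt_pi.1 hx i).mul (hasDerivAt_pi.1 hy i)

theorem hasDerivAt_matrix_mulVec {A : 𝕜 → Matrix l n 𝔸} {A' : Matrix l n 𝔸}
    {x : 𝕜 → n → 𝔸} {x' : n → 𝔸} (hA : HasDerivAt A A' t) (hx : HasDerivAt x x' t) :
    HasDerivAt (fun s => A s *ᵥ x s) (A' *ᵥ x t + A t *ᵥ x') t :=
  hasDerivAt_pi.2 fun i =>
    hasDerivAt_dotProduct (hasDerivAt_pi.2 (hasDerivAt_matrix.1 hA i)) hx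

theorem hasDerivAt_matrix_mul {A : 𝕜 → Matrix l m 𝔸} {A' : Matrix l m 𝔸}
    {B : 𝕜 → Matrix m p 𝔸} {B' : Matrix m p 𝔸} (hA : HasDerivAt A A' t) (hB : HasDerivAt B B' t) :
    HasDerivAt (fun s => A s * B s) (A' * B t + A t * B') t :=
  hasDerivAt_matrix.2 fun i j => hasDerivAt_dotProduct
    (hasDerivAt_pi.2 (hasDerivAt_matrix.1 hA i))
    (hasDerivAt_pi.2 fun k => hasDerivAt_matrix.1 hB k j)

theorem hasDerivAt_half_dotProduct_mulVec {J : Matrix n n ℝ} (hJ : J.IsSymm)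
    {x : ℝ → n → ℝ} {x' : n → ℝ} {t : ℝ} (hx : HasDerivAt x x' t) :
    HasDerivAt (fun s => (1 / 2 : ℝ) * (x s ⬝ᵥ (J *ᵥ x s))) (x t ⬝ᵥ (J *ᵥ x')) t := by
  have hJx := hasDerivAt_matrix_mulVec (hasDerivAt_matrix_const J t) hx
  refine ((hasDerivAt_dotProduct hx hJx).const_mul (1 / 2 : ℝ)).congr_deriv ?_
  have hsymm : x' ⬝ᵥ (J *ᵥ x t) = x t ⬝ᵥ (J *ᵥ x') := by
    rw [dotProduct_mulVec, ← mulVec_transpose, hJ.eq, dotProduct_comm]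
  rw [zero_mulVec, zero_add, hsymm]
  ring

theorem hasDerivAt_half_trace_transpose_mul_mul {W : Matrix n n ℝ} (hW : W.IsSymm)
    {E : ℝ → Matrix m n ℝ} {E' : Matrix m n ℝ} {t : ℝ} (hE : HasDerivAt E E' t) :
    HasDerivAt (fun s => (1 / 2 : ℝ) * ((E s)ᵀ * E s * W).trace) ((E t)ᵀ * E' * W).trace t := by
  have hEE := hasDerivAt_matrix_mul (hasDerivAt_matrix_transpose (E := ℝ) hE) hE
  have hEEW := hasDerivAt_matrix_mul hEE (hasDerivAt_matrix_const W t)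
  refine ((hasDerivAt_matrix_trace (E := ℝ) hEEW).const_mul (1 / 2 : ℝ)).congr_deriv ?_
  have hsymm : (E'ᵀ * E t * W).trace = ((E t)ᵀ * E' * W).trace := by
    rw [← trace_transpose, transpose_mul, transpose_mul, transpose_transpose, hW.eq, trace_mul_comm]
  rw [Matrix.mul_zero, add_zero, Matrix.add_mul, trace_add, hsymm]
  ring

end MatrixCalculus

section Rotation

variable {S : Type*} [CommRing S]

theorem transpose_mulVec_cross_mulVec (A : Matrix (Fin 3) (Fin 3) S)
    (x y : Fin 3 → S) : Aᵀ *ᵥ ((A *ᵥ x) ⨯₃ (A *ᵥ y)) = A.det • (x ⨯₃ y) := by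
  refine dotProduct_eq _ _ fun z => ?_
  have hrows : ![A *ᵥ z, A *ᵥ x, A *ᵥ y] = of ![z, x, y] * Aᵀ := by
    ext i j
    fin_cases i <;> simp [mul_apply, mulVec, dotProduct, mul_comm]
  calc Aᵀ *ᵥ ((A *ᵥ x) ⨯₃ (A *ᵥ y)) ⬝ᵥ z
      = A *ᵥ z ⬝ᵥ (A *ᵥ x) ⨯₃ (A *ᵥ y) := by
        rw [dotProduct_comm, dotProduct_mulVec, vecMul_transpose]
    _ = det ![z, x, y] * A.det := by
        rw [triple_product_eq_det, hrows, det_mul, det_transpose]; rfl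
    _ = A.det • (x ⨯₃ y) ⬝ᵥ z := by
        rw [← triple_product_eq_det, smul_dotProduct, smul_eq_mul, dotProduct_comm, mul_comm]

theorem mulVec_cross {Q : Matrix (Fin 3) (Fin 3) S} (hQ : Qᵀ * Q = 1) (hdet : Q.det = 1)
    (x y : Fin 3 → S) : Q *ᵥ (x ⨯₃ y) = (Q *ᵥ x) ⨯₃ (Q *ᵥ y) := by
  rw [← one_smul S (x ⨯₃ y), ← hdet, ← transpose_mulVec_cross_mulVec, mulVec_mulVec,
    mul_eq_one_comm.1 hQ, one_mulVec]

end Rotation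

section Skew

theorem skew_mulVec (x y : Fin 3 → ℝ) : skew x *ᵥ y = x ⨯₃ y := by
  ext i
  fin_cases i <;>
    simp [skew, cross_apply, mulVec, dotProduct, Fin.sum_univ_three, sub_eq_add_neg, add_comm]

theorem skew_transpose (x : Fin 3 → ℝ) : (skew x)ᵀ = -skew x := by
  ext i j
  fin_cases i <;> fin_cases j <;> simp [skew]

theorem skew_sub (x y : Fin 3 → ℝ) : skew (x - y) = skew x - skew y :=
  ext_iff_mulVec.2 fun z => by
    simp only [sub_mulVec, map_sub, LinearMap.sub_apply, skew_mulVec]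

theorem trace_skew_mul (x : Fin 3 → ℝ) (A : Matrix (Fin 3) (Fin 3) ℝ) :
    (skew x * A).trace = x ⬝ᵥ vex (Aᵀ - A) := by
  simp only [trace, diag_apply, mul_apply, dotProduct, Fin.sum_univ_three, skew, vex, of_apply,
    cons_val, Matrix.sub_apply, transpose_apply]
  ring

theorem mul_skew_transpose_mulVec {Q : Matrix (Fin 3) (Fin 3) ℝ} (hQ : Qᵀ * Q = 1)
    (hdet : Q.det = 1) (w : Fin 3 → ℝ) : Q * skew (Qᵀ *ᵥ w) = skew w * Q :=
  ext_iff_mulVec.2 fun x => by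
    rw [← mulVec_mulVec, ← mulVec_mulVec, skew_mulVec, skew_mulVec, mulVec_cross hQ hdet,
      mulVec_mulVec, mul_eq_one_comm.1 hQ, one_mulVec]

end Skew

section RigidMotion

theorem adMat_mulVec_self (w v : Fin 3 → ℝ) : adMat w v *ᵥ Sum.elim w v = 0 := by
  simp [adMat, fromBlocks_mulVec, skew_mulVec, cross_anticomm']

theorem AdMat_inv_mulVec_sumElim {Q : Matrix (Fin 3) (Fin 3) ℝ} (hQ : Qᵀ * Q = 1)
    (hdet : Q.det = 1) (b w v : Fin 3 → ℝ) :
    AdMat Qᵀ (-(Qᵀ *ᵥ b)) *ᵥ Sum.elim w v = Sum.elim (Qᵀ *ᵥ w) (Qᵀ *ᵥ (w ⨯₃ b + v)) := by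
  have hcross : (Qᵀ *ᵥ w) ⨯₃ (Qᵀ *ᵥ b) = Qᵀ *ᵥ (w ⨯₃ b) :=
    (mulVec_cross (by rw [transpose_transpose, mul_eq_one_comm.1 hQ]) (by rwa [det_transpose])
      w b).symm
  simp [AdMat, fromBlocks_mulVec, ← mulVec_mulVec, skew_mulVec, cross_anticomm, hcross,
    mulVec_add]

theorem hasDerivAt_pose_iff {R : ℝ → Matrix (Fin 3) (Fin 3) ℝ} {b : ℝ → Fin 3 → ℝ}
    {Ω ν : Fin 3 → ℝ} {t : ℝ} :
    HasDerivAt (fun s => pose (R s) (b s)) (pose (R t) (b t) * hat4 Ω ν) t ↔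
      HasDerivAt R (R t * skew Ω) t ∧ HasDerivAt b (R t *ᵥ ν) t := by
  have hvel : pose (R t) (b t) * hat4 Ω ν =
      fromBlocks (R t * skew Ω) (of fun i _ => (R t *ᵥ ν) i) 0 0 := by
    simp only [pose, hat4, fromBlocks_multiply, Matrix.mul_zero, Matrix.zero_mul, add_zero]
    rfl
  rw [hvel]
  simp [hasDerivAt_matrix, hasDerivAt_pi, pose, forall_and, hasDerivAt_const]

end RigidMotion

section Measurements

variable {β : Type*} {D : Matrix (Fin 3) β ℝ} {W : Matrix β β ℝ}
  {R Rhat : ℝ → Matrix (Fin 3) (Fin 3) ℝ} {b bhat abar y : ℝ → Fin 3 → ℝ}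
  {L : ℝ → Matrix (Fin 3) β ℝ} {p Ω ν w v : Fin 3 → ℝ} {t : ℝ}

theorem hasDerivAt_measuredDirections (hR : HasDerivAt R (R t * skew Ω) t) :
    HasDerivAt (fun s => (R s)ᵀ * D) (-(skew Ω * ((R t)ᵀ * D))) t := by
  convert hasDerivAt_matrix_mul (hasDerivAt_matrix_transpose (E := ℝ) hR)
    (hasDerivAt_matrix_const D t) using 1
  rw [transpose_mul, skew_transpose, Matrix.mul_zero, add_zero, Matrix.neg_mul, Matrix.neg_mul,
    Matrix.mul_assoc]

theorem hasDerivAt_measuredPosition (hSO : (R t)ᵀ * R t = 1)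
    (hR : HasDerivAt R (R t * skew Ω) t) (hb : HasDerivAt b (R t *ᵥ ν) t) :
    HasDerivAt (fun s => (R s)ᵀ *ᵥ (p - b s)) (-(Ω ⨯₃ ((R t)ᵀ *ᵥ (p - b t)) + ν)) t := by
  convert hasDerivAt_matrix_mulVec (hasDerivAt_matrix_transpose (E := ℝ) hR) (hb.const_sub p)
    using 1
  rw [transpose_mul, skew_transpose, mulVec_neg, mulVec_mulVec, hSO, one_mulVec, ← mulVec_mulVec,
    neg_mulVec, skew_mulVec, ← neg_add]

theorem hasDerivAt_mul_measuredDirections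
    (hRhat : HasDerivAt Rhat (Rhat t * skew Ω - skew w * Rhat t) t)
    (hL : HasDerivAt L (-(skew Ω * L t)) t) :
    HasDerivAt (fun s => Rhat s * L s) (-(skew w * (Rhat t * L t))) t := by
  convert hasDerivAt_matrix_mul hRhat hL using 1
  rw [Matrix.sub_mul, Matrix.mul_neg, Matrix.mul_assoc, Matrix.mul_assoc]
  abel

theorem hasDerivAt_positionResidual (hy : ∀ s, y s = p - Rhat s *ᵥ abar s - bhat s)
    (hRhat : HasDerivAt Rhat (Rhat t * skew Ω - skew w * Rhat t) t)
    (hbhat : HasDerivAt bhat (Rhat t *ᵥ ν - (w ⨯₃ bhat t + v)) t)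
    (habar : HasDerivAt abar (-(Ω ⨯₃ abar t + ν)) t) :
    HasDerivAt y (w ⨯₃ (p - y t) + v) t := by
  have hrec : p - y t = Rhat t *ᵥ abar t + bhat t := by rw [hy]; abel
  rw [hrec, funext hy]
  refine (((hasDerivAt_matrix_mulVec hRhat habar).const_sub p).sub hbhat).congr_deriv ?_
  simp only [sub_mulVec, ← mulVec_mulVec, skew_mulVec, mulVec_neg, mulVec_add, map_add]
  abel

theorem hasDerivAt_half_mul_dotProduct_positionResidual (κ : ℝ)
    (hy : HasDerivAt y (w ⨯₃ (p - y t) + v) t) :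
    HasDerivAt (fun s => (1 / 2 : ℝ) * κ * (y s ⬝ᵥ y s))
      (κ * (w ⬝ᵥ (p ⨯₃ y t) + v ⬝ᵥ y t)) t := by
  have hpower : y t ⬝ᵥ (w ⨯₃ (p - y t) + v) = w ⬝ᵥ (p ⨯₃ y t) + v ⬝ᵥ y t := by
    rw [map_sub, dotProduct_add, dotProduct_sub, dot_cross_self, sub_zero,
      triple_product_permutation, dotProduct_comm (y t) v]
  refine ((hasDerivAt_dotProduct hy hy).const_mul _).congr_deriv ?_
  rw [dotProduct_comm (_ + v), hpower]
  ring

variable [Fintype β]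

/-- The attitude potential `U_r = ½⟨D − R̂L, (D − R̂L)W⟩`, a Wahba cost that compares the known
directions `D` with the measured directions `L` reconstructed by the attitude estimate `Q = R̂`. -/
def attitudePotential (D : Matrix (Fin 3) β ℝ) (W : Matrix β β ℝ) (L : Matrix (Fin 3) β ℝ)
    (Q : Matrix (Fin 3) (Fin 3) ℝ) : ℝ :=
  (1 / 2 : ℝ) * ((D - Q * L)ᵀ * (D - Q * L) * W).trace

/-- The vector `S_Γ(R̂) = vex(D W Lᵀ R̂ᵀ − R̂ L W Dᵀ)` at `Q = R̂`: the gradient of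
`attitudePotential` under rotations of the reconstructed directions, signed so that
`Ȧ = -w^× A` for `A = Q L` gives the rate `w ⬝ S_Γ`. -/
def attitudeGradient (D : Matrix (Fin 3) β ℝ) (W : Matrix β β ℝ) (L : Matrix (Fin 3) β ℝ)
    (Q : Matrix (Fin 3) (Fin 3) ℝ) : Fin 3 → ℝ :=
  vex (D * W * Lᵀ * Qᵀ - Q * L * W * Dᵀ)

theorem hasDerivAt_attitudePotential (hW : W.IsSymm)
    (hA : HasDerivAt (fun s => Rhat s * L s) (-(skew w * (Rhat t * L t))) t) :
    HasDerivAt (fun s => attitudePotential D W (L s) (Rhat s))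
      (w ⬝ᵥ attitudeGradient D W (L t) (Rhat t)) t := by
  have hE : HasDerivAt (fun s => D - Rhat s * L s) (skew w * (Rhat t * L t)) t :=
    hasDerivAt_matrix.2 fun i j =>
      ((hasDerivAt_matrix.1 hA i j).const_sub (D i j)).congr_deriv (neg_neg _)
  refine (hasDerivAt_half_trace_transpose_mul_mul hW hE).congr_deriv ?_
  set A := Rhat t * L t
  calc ((D - A)ᵀ * (skew w * A) * W).trace
      = (skew w * (A * W * (D - A)ᵀ)).trace := by
        rw [Matrix.mul_assoc, trace_mul_comm]
        simp only [Matrix.mul_assoc]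
    _ = w ⬝ᵥ vex ((D - A) * W * Aᵀ - A * W * (D - A)ᵀ) := by
        rw [trace_skew_mul]
        simp only [transpose_mul, transpose_transpose, hW.eq, Matrix.mul_assoc]
    _ = w ⬝ᵥ attitudeGradient D W (L t) (Rhat t) := by
        simp only [attitudeGradient, A, transpose_mul, transpose_sub, Matrix.sub_mul,
          Matrix.mul_sub, Matrix.mul_assoc]
        congr 2
        abel

end Measurements

section Estimator

theorem hasDerivAt_estimate {Q : ℝ → Matrix (Fin 3) (Fin 3) ℝ} {b : ℝ → Fin 3 → ℝ}
    {Ω ν w v : Fin 3 → ℝ} {ξhat : Fin 3 ⊕ Fin 3 → ℝ} {t : ℝ}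
    (hQ : (Q t)ᵀ * Q t = 1) (hdet : (Q t).det = 1)
    (hξhat : ξhat = Sum.elim Ω ν - AdMat (Q t)ᵀ (-((Q t)ᵀ *ᵥ b t)) *ᵥ Sum.elim w v)
    (hpose : HasDerivAt (fun s => pose (Q s) (b s))
      (pose (Q t) (b t) * hat4 (fun i => ξhat (Sum.inl i)) (fun i => ξhat (Sum.inr i))) t) :
    HasDerivAt Q (Q t * skew Ω - skew w * Q t) t ∧
      HasDerivAt b (Q t *ᵥ ν - (w ⨯₃ b t + v)) t := by
  rw [AdMat_inv_mulVec_sumElim hQ hdet] at hξhat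
  have hrot : (fun i => ξhat (Sum.inl i)) = Ω - (Q t)ᵀ *ᵥ w := by rw [hξhat]; rfl
  have htrans : (fun i => ξhat (Sum.inr i)) = ν - (Q t)ᵀ *ᵥ (w ⨯₃ b t + v) := by rw [hξhat]; rfl
  rwa [hasDerivAt_pose_iff, hrot, htrans, skew_sub, Matrix.mul_sub,
    mul_skew_transpose_mulVec hQ hdet, mulVec_sub, mulVec_mulVec, mul_eq_one_comm.1 hQ,
    one_mulVec] at hpose

theorem dotProduct_adMat_transpose_mulVec (w v : Fin 3 → ℝ) (μ : Fin 3 ⊕ Fin 3 → ℝ) :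
    Sum.elim w v ⬝ᵥ ((adMat w v)ᵀ *ᵥ μ) = 0 := by
  rw [dotProduct_mulVec, vecMul_transpose, adMat_mulVec_self, zero_dotProduct]

theorem hasDerivAt_kineticEnergy {𝕁 𝔻 : Matrix (Fin 3 ⊕ Fin 3) (Fin 3 ⊕ Fin 3) ℝ} (h𝕁 : 𝕁.IsSymm)
    {φ : ℝ → Fin 3 ⊕ Fin 3 → ℝ} {φ' Z : Fin 3 ⊕ Fin 3 → ℝ} {w v : Fin 3 → ℝ} {t : ℝ}
    (hφwv : φ t = Sum.elim w v) (hφ : HasDerivAt φ φ' t)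
    (hφ' : 𝕁 *ᵥ φ' = (adMat w v)ᵀ *ᵥ (𝕁 *ᵥ φ t) - Z - 𝔻 *ᵥ φ t) :
    HasDerivAt (fun s => (1 / 2 : ℝ) * (φ s ⬝ᵥ (𝕁 *ᵥ φ s)))
      (-(φ t ⬝ᵥ Z) - φ t ⬝ᵥ (𝔻 *ᵥ φ t)) t := by
  refine (hasDerivAt_half_dotProduct_mulVec h𝕁 hφ).congr_deriv ?_
  rw [hφ', dotProduct_sub, dotProduct_sub, hφwv, dotProduct_adMat_transpose_mulVec, zero_sub]

theorem estimator_energy_dissipation_general {β : Type*} [Fintype β]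
    {D : Matrix (Fin 3) β ℝ} {pbar : Fin 3 → ℝ} {W : Matrix β β ℝ} (hW : W.IsSymm) {κ : ℝ}
    {𝕁 𝔻 : Matrix (Fin 3 ⊕ Fin 3) (Fin 3 ⊕ Fin 3) ℝ} (h𝕁 : 𝕁.IsSymm) (h𝔻 : 𝔻.PosSemidef)
    {R Rhat : ℝ → Matrix (Fin 3) (Fin 3) ℝ} {b bhat : ℝ → Fin 3 → ℝ} {Ω ν w v : Fin 3 → ℝ}
    {t : ℝ} (hSO : (R t)ᵀ * R t = 1) (hSOhat : (Rhat t)ᵀ * Rhat t = 1 ∧ (Rhat t).det = 1)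
    (hg : HasDerivAt (fun s => pose (R s) (b s)) (pose (R t) (b t) * hat4 Ω ν) t)
    {L : ℝ → Matrix (Fin 3) β ℝ} (hL : ∀ s, L s = (R s)ᵀ * D)
    {abar : ℝ → Fin 3 → ℝ} (habar : ∀ s, abar s = (R s)ᵀ *ᵥ (pbar - b s))
    {y : ℝ → Fin 3 → ℝ} (hy : ∀ s, y s = pbar - Rhat s *ᵥ abar s - bhat s)
    {SΓ : Fin 3 → ℝ} (hSΓ : SΓ = attitudeGradient D W (L t) (Rhat t))
    {Ur : ℝ → ℝ} (hUr : ∀ s, Ur s = attitudePotential D W (L s) (Rhat s))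
    {Φ : ℝ → ℝ} (hΦ : DifferentiableAt ℝ Φ (Ur t)) {Z : Fin 3 ⊕ Fin 3 → ℝ}
    (hZ : Z = Sum.elim (deriv Φ (Ur t) • SΓ + κ • (skew pbar *ᵥ y t)) (κ • y t))
    {φ : ℝ → Fin 3 ⊕ Fin 3 → ℝ} {φ' : Fin 3 ⊕ Fin 3 → ℝ} (hφwv : φ t = Sum.elim w v)
    (hφ : HasDerivAt φ φ' t)
    (hφ' : 𝕁 *ᵥ φ' = (adMat w v)ᵀ *ᵥ (𝕁 *ᵥ φ t) - Z - 𝔻 *ᵥ φ t)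
    {ξhat : Fin 3 ⊕ Fin 3 → ℝ}
    (hξhat : ξhat = Sum.elim Ω ν - AdMat (Rhat t)ᵀ (-((Rhat t)ᵀ *ᵥ bhat t)) *ᵥ φ t)
    (hghat : HasDerivAt (fun s => pose (Rhat s) (bhat s))
      (pose (Rhat t) (bhat t) * hat4 (fun i => ξhat (Sum.inl i)) (fun i => ξhat (Sum.inr i))) t)
    {V : ℝ → ℝ}
    (hV : ∀ s, V s = (1 / 2 : ℝ) * (φ s ⬝ᵥ (𝕁 *ᵥ φ s)) + Φ (Ur s) +
      (1 / 2 : ℝ) * κ * (y s ⬝ᵥ y s)) :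
    HasDerivAt V (-(φ t ⬝ᵥ (𝔻 *ᵥ φ t))) t ∧ -(φ t ⬝ᵥ (𝔻 *ᵥ φ t)) ≤ 0 := by
  refine ⟨?_, neg_nonpos.2 (by simpa using h𝔻.dotProduct_mulVec_nonneg (φ t))⟩
  obtain rfl : L = fun s => (R s)ᵀ * D := funext hL
  obtain rfl : abar = fun s => (R s)ᵀ *ᵥ (pbar - b s) := funext habar
  obtain ⟨hR, hb⟩ := hasDerivAt_pose_iff.1 hg
  obtain ⟨hRhat, hbhat⟩ := hasDerivAt_estimate hSOhat.1 hSOhat.2 (hφwv ▸ hξhat) hghat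
  have hUr' : HasDerivAt Ur (w ⬝ᵥ SΓ) t := by
    rw [funext hUr, hSΓ]
    exact hasDerivAt_attitudePotential hW
      (hasDerivAt_mul_measuredDirections hRhat (hasDerivAt_measuredDirections hR))
  have hy' : HasDerivAt y (w ⨯₃ (pbar - y t) + v) t :=
    hasDerivAt_positionResidual hy hRhat hbhat (hasDerivAt_measuredPosition hSO hR hb)
  have hφZ : φ t ⬝ᵥ Z =
      deriv Φ (Ur t) * (w ⬝ᵥ SΓ) + κ * (w ⬝ᵥ (pbar ⨯₃ y t) + v ⬝ᵥ y t) := by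
    simp only [hφwv, hZ, sumElim_dotProduct_sumElim, dotProduct_add, dotProduct_smul, smul_eq_mul,
      skew_mulVec]
    ring
  rw [funext hV]
  refine (((hasDerivAt_kineticEnergy h𝕁 hφwv hφ hφ').add (hΦ.hasDerivAt.comp t hUr')).add
    (hasDerivAt_half_mul_dotProduct_positionResidual κ hy')).congr_deriv ?_
  rw [hφZ]
  ring

end Estimator

/-- energy dissipation along the variational estimator, core of Theorem 1:
with perfect measurements, along any solution of the estimator equations
`𝕁 φ̇ = ad*_φ 𝕁 φ − Z − 𝔻 φ`, `ξ̂ = ξ − Ad_{ĝ⁻¹} φ`, `ĝ̇ = ĝ ξ̂^∨`,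
the total energy `V = ½ φᵀ𝕁φ + Φ(U_r) + ½ κ ‖y‖²` satisfies
`dV/dt = −φᵀ𝔻φ ≤ 0`. -/
theorem estimator_energy_dissipation {β : ℕ}
    (D : Matrix (Fin 3) (Fin β) ℝ) (pbar : Fin 3 → ℝ)
    (W : Matrix (Fin β) (Fin β) ℝ) (hW : W.PosDef)
    (κ : ℝ) (hκ : 0 < κ)
    (𝕁 𝔻 : Matrix (Fin 3 ⊕ Fin 3) (Fin 3 ⊕ Fin 3) ℝ)
    (h𝕁 : 𝕁.PosDef) (h𝔻 : 𝔻.PosDef)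
    (Φ : ℝ → ℝ) (hΦreg : ContDiff ℝ 2 Φ) (hΦ0 : Φ 0 = 0)
    (hΦ' : ∀ x : ℝ, 0 ≤ x → 0 < deriv Φ x)
    -- the true motion: a C¹ curve g = [[R, b],[0,1]] in SE(3) with ġ = g ξ^∨
    (R Rhat : ℝ → Matrix (Fin 3) (Fin 3) ℝ) (b bhat : ℝ → Fin 3 → ℝ)
    (ξ φ : ℝ → (Fin 3 → ℝ) × (Fin 3 → ℝ))
    (hSO : ∀ t, (R t)ᵀ * R t = 1 ∧ (R t).det = 1)
    (hSOhat : ∀ t, (Rhat t)ᵀ * Rhat t = 1 ∧ (Rhat t).det = 1)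
    (hg : ∀ t i j, HasDerivAt (fun s => pose (R s) (b s) i j)
      ((pose (R t) (b t) * hat4 (ξ t).1 (ξ t).2) i j) t)
    -- perfect measurements
    (L : ℝ → Matrix (Fin 3) (Fin β) ℝ) (hL : ∀ t, L t = (R t)ᵀ * D)
    (abar : ℝ → Fin 3 → ℝ) (habar : ∀ t, abar t = (R t)ᵀ *ᵥ (pbar - b t))
    -- residuals and forcing term of the estimator
    (y : ℝ → Fin 3 → ℝ) (hy : ∀ t, y t = pbar - Rhat t *ᵥ abar t - bhat t)
    (SΓ : ℝ → Fin 3 → ℝ)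
    (hSΓ : ∀ t, SΓ t = vex (D * W * (L t)ᵀ * (Rhat t)ᵀ - Rhat t * L t * W * Dᵀ))
    (Ur : ℝ → ℝ)
    (hUr : ∀ t, Ur t = (1 / 2 : ℝ) * ((D - Rhat t * L t)ᵀ * (D - Rhat t * L t) * W).trace)
    (Z : ℝ → Fin 3 ⊕ Fin 3 → ℝ)
    (hZ : ∀ t, Z t = Sum.elim (deriv Φ (Ur t) • SΓ t + κ • (skew pbar *ᵥ y t)) (κ • y t))
    -- the estimator equations
    (φv : ℝ → Fin 3 ⊕ Fin 3 → ℝ) (hφv : ∀ t, φv t = Sum.elim (φ t).1 (φ t).2)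
    (hφ : ∀ t i, HasDerivAt (fun s => φv s i)
      ((𝕁⁻¹ *ᵥ ((adMat (φ t).1 (φ t).2)ᵀ *ᵥ (𝕁 *ᵥ φv t) - Z t - 𝔻 *ᵥ φv t)) i) t)
    (ξhat : ℝ → Fin 3 ⊕ Fin 3 → ℝ)
    (hξhat : ∀ t, ξhat t = Sum.elim (ξ t).1 (ξ t).2 -
      AdMat ((Rhat t)ᵀ) (-((Rhat t)ᵀ *ᵥ bhat t)) *ᵥ φv t)
    (hghat : ∀ t i j, HasDerivAt (fun s => pose (Rhat s) (bhat s) i j)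
      ((pose (Rhat t) (bhat t) *
        hat4 (fun i => ξhat t (Sum.inl i)) (fun i => ξhat t (Sum.inr i))) i j) t)
    -- the total energy
    (V : ℝ → ℝ)
    (hV : ∀ t, V t = (1 / 2 : ℝ) * (φv t ⬝ᵥ (𝕁 *ᵥ φv t)) + Φ (Ur t) +
      (1 / 2 : ℝ) * κ * (y t ⬝ᵥ y t)) :
    ∀ t, HasDerivAt V (-(φv t ⬝ᵥ (𝔻 *ᵥ φv t))) t ∧
      -(φv t ⬝ᵥ (𝔻 *ᵥ φv t)) ≤ 0 := by
  intro t
  refine estimator_energy_dissipation_general (isHermitian_iff_isSymm.1 hW.isHermitian)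
    (isHermitian_iff_isSymm.1 h𝕁.isHermitian) h𝔻.posSemidef (hSO t).1 (hSOhat t)
    (hasDerivAt_matrix.2 (hg t)) hL habar hy (hSΓ t) hUr (hΦreg.differentiable two_ne_zero _)
    (hZ t) (hφv t) (hasDerivAt_pi.2 (hφ t)) ?_ (hξhat t) (hasDerivAt_matrix.2 (hghat t)) hV
  rw [mulVec_mulVec, mul_nonsing_inv _ h𝕁.det_pos.ne'.isUnit, one_mulVec]
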